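/- Let E be a finite abelian group with a perfect skew-symmetric biadditive pairing I : E → E → ℝ/ℤ. Let T ≤ E be an isotropic subgroup, set C := T^⊥ = {x ∈ E | ∀ t ∈ T, I x t = 0}, and let L ≤ E be a Lagrangian subgroup (L = L^⊥). Then for every x ∈ C one has: (∀ l ∈ L ⊓ C, I x l = 0) if and only if x ∈ (L ⊓ C) ⊔ T, where ⊔ denotes the join of subgroups. Equivalently, the image of L ∩ C in the quotient C ⧸ T is a Lagrangian subgroup for the pairing induced by I on C ⧸ T. -/

import Mathlib

/-!
Write `H^⊥` for the orthogonal of a subgroup `H`. Since `L = L^⊥` and `C = T^⊥`, the intersection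
`L ⊓ C` is `(L ⊔ T)^⊥`. For a perfect skew-symmetric pairing on a finite group, `H^⊥^⊥ = H`
(`mem_of_orthogonal_orthogonal`), so `(L ⊓ C)^⊥ = L ⊔ T`. As `T ≤ C`, the modular law
`(L ⊔ T) ⊓ C = (L ⊓ C) ⊔ T` gives the claim. The double orthogonal property holds because
characters with values in `ℚ/ℤ ⊆ ℝ/ℤ` separate the points of `E ⧸ H`, and every character of `E`
is of the form `I y`.
-/

/-- The inclusion `ℚ/ℤ → ℝ/ℤ`. -/
noncomputable def ratCircleToReal : AddCircle (1 : ℚ) →+ AddCircle (1 : ℝ) :=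
  QuotientAddGroup.map _ _ (Rat.castHom ℝ).toAddMonoidHom (by
    rintro _ ⟨n, rfl⟩
    exact ⟨n, by simp⟩)

theorem ratCircleToReal_eq_zero {a : AddCircle (1 : ℚ)} (h : ratCircleToReal a = 0) : a = 0 := by
  induction a using QuotientAddGroup.induction_on with
  | H q =>
    have h' : ((q : ℝ) : AddCircle (1 : ℝ)) = 0 := h
    rw [AddCircle.coe_eq_zero_iff] at h'
    obtain ⟨n, hn⟩ := h'
    refine (AddCircle.coe_eq_zero_iff (1 : ℚ)).2 ⟨n, ?_⟩
    simp only [zsmul_eq_mul, mul_one] at hn ⊢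
    exact_mod_cast hn

/-- If every `ℝ/ℤ`-valued character of `E` has the form `I y`, then any `x` killed by the left
orthogonal of `H` lies in `H`: a character of `E ⧸ H` not vanishing at `x` would be such an `I y`. -/
theorem mem_of_orthogonal_orthogonal {E : Type*} [AddCommGroup E]
    (I : E →+ E →+ AddCircle (1 : ℝ)) (hsurj : Function.Surjective ⇑I)
    (H : AddSubgroup E) (x : E) (hx : ∀ y : E, (∀ h ∈ H, I y h = 0) → I y x = 0) : x ∈ H := by
  by_contra hxH
  have hne : (x : E ⧸ H) ≠ 0 := fun h => hxH ((QuotientAddGroup.eq_zero_iff x).1 h)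
  obtain ⟨c, hc⟩ := CharacterModule.exists_character_apply_ne_zero_of_ne_zero hne
  obtain ⟨y, hy⟩ := hsurj ((ratCircleToReal.comp (c : E ⧸ H →+ AddCircle (1 : ℚ))).comp
    (QuotientAddGroup.mk' H))
  have hval : ∀ z : E, I y z = ratCircleToReal (c (z : E ⧸ H)) := fun z => DFunLike.congr_fun hy z
  refine hc (ratCircleToReal_eq_zero ?_)
  rw [← hval]
  refine hx y fun h hh => ?_
  rw [hval, (QuotientAddGroup.eq_zero_iff h).2 hh, map_zero, map_zero]

/-- Given a perfect skew-symmetric pairing `I` on a finite abelian group `E`, an isotropic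
subgroup `T` with orthogonal `C`, and a Lagrangian subgroup `L`, an element `x ∈ C` is orthogonal
to `L ⊓ C` if and only if it lies in `(L ⊓ C) ⊔ T`; i.e. the image of `L ∩ C` in `C ⧸ T` is
Lagrangian for the induced pairing. -/
theorem stmt9 {E : Type*} [AddCommGroup E] [Finite E]
    (I : E →+ E →+ AddCircle (1 : ℝ))
    (hperf : Function.Bijective ⇑I)
    (hskew : ∀ x y : E, I x y = - I y x)
    (T C L : AddSubgroup E)
    (hTiso : ∀ t ∈ T, ∀ t' ∈ T, I t t' = 0)
    (hC : ∀ x : E, x ∈ C ↔ ∀ t ∈ T, I x t = 0)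
    (hL : ∀ x : E, x ∈ L ↔ ∀ l ∈ L, I x l = 0) :
    ∀ x ∈ C, ((∀ l ∈ L ⊓ C, I x l = 0) ↔ x ∈ (L ⊓ C) ⊔ T) := by
  intro x hx
  have hTC : T ≤ C := fun t ht => (hC t).2 (hTiso t ht)
  constructor
  · intro h
    have hLT : x ∈ L ⊔ T := by
      refine mem_of_orthogonal_orthogonal I hperf.surjective _ x fun y hy => ?_
      have hyL : y ∈ L := (hL y).2 fun l hl => hy l (AddSubgroup.mem_sup_left hl)
      have hyC : y ∈ C := (hC y).2 fun t ht => hy t (AddSubgroup.mem_sup_right ht)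
      rw [hskew, h y ⟨hyL, hyC⟩, neg_zero]
    obtain ⟨l, hl, t, ht, rfl⟩ := AddSubgroup.mem_sup.1 hLT
    have hlC : l ∈ C := by simpa using C.sub_mem hx (hTC ht)
    exact AddSubgroup.add_mem_sup ⟨hl, hlC⟩ ht
  · intro h m hm
    obtain ⟨l, hl, t, ht, rfl⟩ := AddSubgroup.mem_sup.1 h
    rw [map_add, AddMonoidHom.add_apply, (hL l).1 hl.1 m hm.1, hskew t m, (hC m).1 hm.2 t ht,
      neg_zero, add_zero]
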